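/- arXiv:2205.13017 — 5 statements merged into one kernel-verified Lean document; each statement's English description precedes it below -/
import Mathlib

section
/- Let u ∈ ℂ satisfy u² − 7u + 11 = 0. Then there exist a nonzero complex number c and a homogeneous quadratic form q(y,z) ∈ ℂ[y,z] such that f(u·y + (−u+2)·z, y, z) = c · q(y,z)². (That is, the line x = u·y + (−u+2)·z is a bitangent to the curve X.) -/
/-! Substituting `x = u·y + (-u+2)·z` into the quartic and reducing modulo `u² - 7u + 11` gives
`(35-24u)y⁴ + (-296+128u)y³z + (416-172u)y²z² + (-192+80u)yz³ + (28-12u)z⁴`.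
Taking `c = 35 - 24u`, the coefficients of `y⁴`, `y³z` and `y²z²` determine a monic quadratic form
as the only candidate for the square root, and the remaining two coefficients agree.
The constant `c` is nonzero because its norm from `ℚ(u)` is `1681 = 41²`. -/

/-- The quartic form defining the canonical model of `X₀(75)/w₂₅`. -/
noncomputable def fQuartic (x y z : ℂ) : ℂ :=
  3*x^3*z - 3*x^2*y^2 + 5*x^2*z^2 - 3*x*y^3 - 19*x*y^2*z - x*y*z^2 + 3*x*z^3
    + 2*y^4 + 7*y^3*z - 7*y^2*z^2 - 3*y*z^3

/-- The line `x = u·y + (-u+2)·z` is a bitangent to `X₀(75)/w₂₅`. -/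
theorem stmt_3 (u : ℂ) (hu : u^2 - 7*u + 11 = 0) :
    ∃ (c : ℂ) (α β γ : ℂ), c ≠ 0 ∧
      ∀ y z : ℂ, fQuartic (u*y + (-u + 2)*z) y z = c * (α*y^2 + β*y*z + γ*z^2)^2 := by
  refine ⟨35 - 24*u, 1, (68 - 32*u)/41, (-40 + 14*u)/41, ?_, fun y z => ?_⟩
  · intro h
    -- `24u - 133` is the conjugate of `35 - 24u`, so their product is the norm `1681`.
    have hnorm : (35 - 24*u) * (24*u - 133) = 1681 := by linear_combination (-576) * hu
    rw [h] at hnorm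
    norm_num at hnorm
  · unfold fQuartic
    -- The multiplier is the quotient of the difference of the two sides by `u² - 7u + 11`.
    linear_combination (((3)*u
      + (-429/41))*y^3*z
      + ((9447/1681)*u
      + (-12987/1681))*y^2*z^2
      + ((-6375/1681)*u
      + (16545/1681))*y*z^3
      + ((-339/1681)*u
      + (2550/1681))*z^4
      + ((-3))*y^4) * hu
end

section
/- Let u ∈ ℂ satisfy −u² − 8u + 4 = 0. Then there exist a nonzero complex number c and a homogeneous quadratic form q(y,z) ∈ ℂ[y,z] such that f(u·y + (2u−1)·z, y, z) = c · q(y,z)². (That is, the line x = u·y + (2u−1)·z is a bitangent to the curve X.) -/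
/-- The line `x = u·y + (2u-1)·z` is a bitangent to `X₀(75)/w₂₅`. -/
theorem stmt_4 (u : ℂ) (hu : -u^2 - 8*u + 4 = 0) :
    ∃ (c : ℂ) (α β γ : ℂ), c ≠ 0 ∧
      ∀ y z : ℂ, fQuartic (u*y + (2*u - 1)*z) y z = c * (α*y^2 + β*y*z + γ*z^2)^2 := by
  refine ⟨21*u - 10, 1, (u + 62)/8, 7*(2 - u)/8, ?_, fun y z => ?_⟩
  · intro h
    have hu' : u = 10/21 := by linear_combination h/21
    rw [hu'] at hu
    norm_num at hu
  · unfold fQuartic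
    -- The multiplier is the quotient of the difference of the two sides by `-u² - 8u + 4`.
    linear_combination (((3)*u^0)*y^4*z^0
      + ((165/4)*u^0 + (-3)*u^1)*y^3*z^1
      + ((5157/32)*u^0 + (-1131/64)*u^1)*y^2*z^2
      + ((1077/16)*u^0 + (-1299/32)*u^1)*y^1*z^3
      + ((237/32)*u^0 + (-507/64)*u^1)*y^0*z^4) * hu
end

section
/- Let u ∈ ℂ satisfy −u⁶ − 3u⁵ + 5u³ − 60u² − 63u + 41 = 0, and set a₂ = (1/27)(u⁵ + u⁴ − 2u³ − u² + 62u − 34). Then there exist a nonzero complex number c and a homogeneous quadratic form q(y,z) ∈ ℂ[y,z] such that f(u·y + a₂·z, y, z) = c · q(y,z)². (That is, the line x = u·y + a₂·z is a bitangent to the curve X.) -/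
/-- The line `x = u·y + a₂·z` is a bitangent to `X₀(75)/w₂₅`. -/
theorem stmt_5 (u : ℂ) (hu : -u^6 - 3*u^5 + 5*u^3 - 60*u^2 - 63*u + 41 = 0)
    (a₂ : ℂ) (ha₂ : a₂ = (1/27) * (u^5 + u^4 - 2*u^3 - u^2 + 62*u - 34)) :
    ∃ (c : ℂ) (α β γ : ℂ), c ≠ 0 ∧
      ∀ y z : ℂ, fQuartic (u*y + a₂*z) y z = c * (α*y^2 + β*y*z + γ*z^2)^2 := by
  obtain ⟨A, hA⟩ : ∃ A : ℂ, A = -3*u^2 - 3*u + 2 := ⟨_, rfl⟩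
  obtain ⟨β, hβ⟩ : ∃ β : ℂ, β =
      433/6 - 449/6*u + 7/6*u^2 + 23/6*u^3 - 7/6*u^4 - 7/6*u^5 := ⟨_, rfl⟩
  obtain ⟨γ, hγ⟩ : ∃ γ : ℂ, γ =
      2440/27 - 8965/54*u + 112/27*u^2 + 349/54*u^3 - 103/27*u^4 - 143/54*u^5 := ⟨_, rfl⟩
  have hA0 : A ≠ 0 := by
    intro h0
    rw [hA] at h0
    -- Bézout relation between `A` and the sextic; the cofactor of `A` is `A⁻¹` in `ℚ(u)`.
    have h1 : (1 : ℂ) = 0 := by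
      linear_combination (-553 + 21*u + 12*u^2 - 18*u^3 - 9*u^4) * h0
        - (-27) * hu
    exact one_ne_zero h1
  have hB : 3*u^3 - 6*u*a₂ - 3*a₂ - 19*u + 7 = 2*A*β := by
    subst hA hβ hγ ha₂
    linear_combination
      (-61/9 + 7*u) * hu
  have hC : 9*u^2*a₂ - 3*a₂^2 + 5*u^2 - 19*a₂ - u - 7 = A*(β^2 + 2*γ) := by
    subst hA hβ hγ ha₂
    linear_combination
      (-127609/486 + 518315/972*u - 535/2*u^2 - 8887/972*u^3 + 16825/972*u^4 - 49/12*u^6) * hu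
  have hD : 9*u*a₂^2 + 10*u*a₂ - a₂ + 3*u - 3 = 2*A*β*γ := by
    subst hA hβ hγ ha₂
    linear_combination
      (-51541/81 + 48745/27*u - 194065/162*u^2 - 2545/162*u^3 + 1919/27*u^4 - 1325/162*u^5
      - 1001/54*u^6) * hu
  have hE : 3*a₂^3 + 5*a₂^2 + 3*a₂ = A*γ^2 := by
    subst hA hβ hγ ha₂
    linear_combination
      (-2614070/6561 + 3169708/2187*u - 1947779/1458*u^2 + 34459/8748*u^3 + 297749/4374*u^4
      - 27055/1458*u^5 - 20449/972*u^6 + 1/2187*u^7 - 1/6561*u^9) * hu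
  refine ⟨A, 1, β, γ, hA0, fun y z => ?_⟩
  unfold fQuartic
  linear_combination -y^4 * hA + y^3*z * hB + y^2*z^2 * hC + y*z^3 * hD + z^4 * hE
end

section
/- Let u ∈ ℂ satisfy 11u⁶ + 49u⁵ + 20u⁴ − 55u³ + 40u² − 11u + 1 = 0, and set a₂ = (1/17)(407u⁵ + 1901u⁴ + 1154u³ − 1773u² + 1106u − 188). Then there exist a nonzero complex number c and a homogeneous quadratic form q(y,z) ∈ ℂ[y,z] such that f(u·y + a₂·z, y, z) = c · q(y,z)². (That is, the line x = u·y + a₂·z is a bitangent to the curve X.) -/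
/-- The line `x = u·y + a₂·z` is a bitangent to `X₀(75)/w₂₅`. -/
theorem stmt_6 (u : ℂ) (hu : 11*u^6 + 49*u^5 + 20*u^4 - 55*u^3 + 40*u^2 - 11*u + 1 = 0)
    (a₂ : ℂ) (ha₂ : a₂ = (1/17) * (407*u^5 + 1901*u^4 + 1154*u^3 - 1773*u^2 + 1106*u - 188)) :
    ∃ (c : ℂ) (α β γ : ℂ), c ≠ 0 ∧
      ∀ y z : ℂ, fQuartic (u*y + a₂*z) y z = c * (α*y^2 + β*y*z + γ*z^2)^2 := by
  refine ⟨-3*u^2 - 3*u + 2, 1,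
    -460779/11254*u^5 - 2145225/11254*u^4 - 1272105/11254*u^3 + 2042889/11254*u^2 - 1249513/11254*u + 225247/11254,
    -141823/11254*u^5 - 332450/5627*u^4 - 24395/662*u^3 + 303471/5627*u^2 - 375469/11254*u + 27983/5627, ?_, ?_⟩
  -- The leading coefficient is coprime to the sextic: a Bézout relation excludes a common root.
  · intro h
    have : (1:ℂ) = 0 := by linear_combination (201960/109561*u^5 + 994779/109561*u^4 + 830502/109561*u^3 - 636936/109561*u^2 + 439509/109561*u + 14267/109561) * h
        + (55080/109561*u + 81027/109561) * hu
    exact one_ne_zero this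
  · intro y z
    subst ha₂
    unfold fQuartic
    -- The cofactors are the quotients by the sextic of the differences of the `y, z`-coefficients.
    linear_combination ((-125667/5627*u - 224421/5627)*(y^3*z)
        + (57904714593/126652516*u^6 + 84783377889/31663129*u^5 + 439610848131/126652516*u^4 - 279860236533/126652516*u^3 - 160791497943/63326258*u^2 + 316663683945/126652516*u - 62367157119/63326258)*(y^2*z^2)
        + (17822470941/63326258*u^6 + 134660433879/63326258*u^5 + 145071968226/31663129*u^4 + 65442696663/63326258*u^3 - 177717980649/63326258*u^2 + 66936074202/31663129*u - 12351006033/31663129)*(y*z^3)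
        + (18387039/4913*u^9 + 175738530/4913*u^8 + 543532257/4913*u^7 + 11491518105009/126652516*u^6 - 87472043878185/1076546386*u^5 - 18646041501789/1076546386*u^4 + 234580883256561/2153092772*u^3 - 80631310703829/1076546386*u^2 + 14282027010957/538273193*u - 1899324834918/538273193)*(z^4)) * hu
end

section
/- Let u ∈ ℂ satisfy −u⁶ − 14u⁵ + 5u⁴ + 20u³ − 95u² − 134u + 139 = 0, and set a₂ = (1/9164)(41u⁵ + 467u⁴ − 1312u³ + 2604u² + 2687u − 3083). Then there exist a nonzero complex number c and a homogeneous quadratic form q(y,z) ∈ ℂ[y,z] such that f(u·y + a₂·z, y, z) = c · q(y,z)². (That is, the line x = u·y + a₂·z is a bitangent to the curve X.) -/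
/-- The value of `a₂` as a polynomial in `u`. -/
noncomputable def slopeZ (u : ℂ) : ℂ :=
  (1/9164) * (41*u^5 + 467*u^4 - 1312*u^3 + 2604*u^2 + 2687*u - 3083)

/-- The coefficient `b` of `yz` in the square root `y² + b yz + g z²`, reduced modulo the
sextic. -/
noncomputable def yzCoeff (u : ℂ) : ℂ :=
  (22793339/25329296)
      + (25757623/25329296)*u
      + (209643/12664648)*u^2
      - (3485295/12664648)*u^3
      + (4827135/25329296)*u^4
      + (372903/25329296)*u^5

/-- The coefficient `g` of `z²` in the square root `y² + b yz + g z²`, reduced modulo the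
sextic. -/
noncomputable def zzCoeff (u : ℂ) : ℂ :=
  (8734111/12664648)
      - (1117916/1583081)*u
      - (739041/12664648)*u^2
      + (1513625/12664648)*u^3
      - (423725/6332324)*u^4
      - (67705/12664648)*u^5

/-- A Bézout certificate that `A = 2 - 3u - 3u²` is invertible modulo the sextic. -/
lemma lead_ne_zero (u : ℂ)
    (hu : -u^6 - 14*u^5 + 5*u^4 + 20*u^3 - 95*u^2 - 134*u + 139 = 0) :
    2 - 3*u - 3*u^2 ≠ 0 := by
  intro h
  have h1 : (1 : ℂ) = 0 := by
    linear_combination ((-3674893/7639696)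
      - (1355271/7639696)*u
      + (267387/3819848)*u^2
      - (106119/3819848)*u^3
      - (227241/7639696)*u^4
      - (14715/7639696)*u^5) * h
      - ((-53919/3819848)
      - (44145/7639696)*u) * hu
  exact one_ne_zero h1

lemma coeff_yyyz (u : ℂ)
    (hu : -u^6 - 14*u^5 + 5*u^4 + 20*u^3 - 95*u^2 - 134*u + 139 = 0) :
    3*u^3 - 6*u*slopeZ u - 3*slopeZ u - 19*u
      + 7
      = 2*(2 - 3*u - 3*u^2)*yzCoeff u := by
  unfold slopeZ yzCoeff
  linear_combination ((50223/1583081)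
      - (1118709/12664648)*u) * hu

lemma coeff_yyzz (u : ℂ)
    (hu : -u^6 - 14*u^5 + 5*u^4 + 20*u^3 - 95*u^2 - 134*u + 139 = 0) :
    9*u^2*slopeZ u - 3*slopeZ u^2 + 5*u^2 - 19*slopeZ u
      - u - 7
      = (2 - 3*u - 3*u^2)*(2*zzCoeff u + yzCoeff u^2) := by
  unfold slopeZ yzCoeff zzCoeff
  linear_combination ((-12290553005907/320786617927808)
      - (24840102602343/641573235855616)*u
      - (27752092899951/641573235855616)*u^2
      + (928537056603/320786617927808)*u^3
      + (1050303910479/80196654481952)*u^4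
      - (5377109488479/641573235855616)*u^5
      - (417169942227/641573235855616)*u^6) * hu

lemma coeff_yzzz (u : ℂ)
    (hu : -u^6 - 14*u^5 + 5*u^4 + 20*u^3 - 95*u^2 - 134*u + 139 = 0) :
    9*u*slopeZ u^2 + 10*u*slopeZ u - slopeZ u + 3*u
      - 3
      = 2*(2 - 3*u - 3*u^2)*yzCoeff u*zzCoeff u := by
  unfold slopeZ yzCoeff zzCoeff
  linear_combination ((-2968988096919/80196654481952)
      - (1314846751977/160393308963904)*u
      + (984377242965/40098327240976)*u^2
      + (2009986234899/160393308963904)*u^3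
      - (2047964746575/160393308963904)*u^4
      + (457484860197/80196654481952)*u^5
      + (75742192845/160393308963904)*u^6) * hu

lemma coeff_zzzz (u : ℂ)
    (hu : -u^6 - 14*u^5 + 5*u^4 + 20*u^3 - 95*u^2 - 134*u + 139 = 0) :
    3*slopeZ u^3 + 5*slopeZ u^2 + 3*slopeZ u
      = (2 - 3*u - 3*u^2)*zzCoeff u^2 := by
  unfold slopeZ zzCoeff
  linear_combination ((-3988718933557713/367461070836304064)
      + (2791874675217507/183730535418152032)*u
      - (2567094055474035/367461070836304064)*u^2
      - (2979050491807755/367461070836304064)*u^3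
      + (25395907201683/4651405959953216)*u^4
      - (794976650182683/367461070836304064)*u^5
      + (29636141320053/367461070836304064)*u^6
      - (1635777/384791301472)*u^7
      - (4170561/769582602944)*u^8
      - (206763/769582602944)*u^9) * hu

/-- The line `x = u·y + a₂·z` is a bitangent to `X₀(75)/w₂₅`. -/
theorem stmt_7 (u : ℂ) (hu : -u^6 - 14*u^5 + 5*u^4 + 20*u^3 - 95*u^2 - 134*u + 139 = 0)
    (a₂ : ℂ) (ha₂ : a₂ = (1/9164) * (41*u^5 + 467*u^4 - 1312*u^3 + 2604*u^2 + 2687*u - 3083)) :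
    ∃ (c : ℂ) (α β γ : ℂ), c ≠ 0 ∧
      ∀ y z : ℂ, fQuartic (u*y + a₂*z) y z = c * (α*y^2 + β*y*z + γ*z^2)^2 := by
  refine ⟨2 - 3*u - 3*u^2, 1, yzCoeff u, zzCoeff u, lead_ne_zero u hu, fun y z => ?_⟩
  have ha : a₂ = slopeZ u := ha₂
  rw [ha, fQuartic]
  linear_combination (y^3*z) * coeff_yyyz u hu + (y^2*z^2) * coeff_yyzz u hu
    + (y*z^3) * coeff_yzzz u hu + z^4 * coeff_zzzz u hu
end
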